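/- Let n ≥ 1 and let Q ⊆ ℝⁿ be a polytope containing 0 in its interior with (finite) vertex set S, and let a : S → ℤ assign to each vertex a positive integer weight. Assume: (i) for every extreme point v of the dual polytope Q*, the facet F_v = {u ∈ Q : ⟨v,u⟩ = −1} has exactly n vertices e₁,…,eₙ, and the vectors (a(e₁)·e₁, …, a(eₙ)·eₙ) form a ℤ-basis of the lattice ℤⁿ; (ii) r := #S − n satisfies r ≥ 2; (iii) C is a real number such that Σ_{s∈T} a(s) ≤ C for every subset T ⊆ S with at most n elements. Let A = max_{s∈S} a(s). Then vol(Q*) ≤ (C^r · A)ⁿ. -/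

import Mathlib

/-- The dual set `Q* = {v : ⟨v,u⟩ ≥ -1 for all u ∈ Q}` of a subset of `ℝⁿ`. -/
def dualSet (n : ℕ) (Q : Set (Fin n → ℝ)) : Set (Fin n → ℝ) :=
  {v | ∀ u ∈ Q, -1 ≤ ∑ i, v i * u i}

/-!
An extreme point `u` of `Q*` minimising `⟨·, p⟩` gives a facet whose cone contains `p`; the facet
being unimodular, a lattice point `p` is a combination of the vectors `a(eᵢ)eᵢ` of that facet with
coefficients in `ℕ`.

Fix a vertex `v` of `Q*` and let `z(s) = a(s)(1 + ⟨v, s⟩)`. If `h` is a vertex of `Q` off the facet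
`F_v`, some set `T` made of `h` and `n - 1` vertices of `F_v` lies in no facet, as otherwise `Q`
would be a simplex. Writing `∑_T a(s)s` in the cone of a facet and evaluating at `v` yields
`z(h) = ∑ⱼ cⱼ z(fⱼ) + d` with `cⱼ ∈ ℕ`, `d ≥ 1` and `∑ⱼ cⱼ + d ≤ C`. As only `r` vertices have
`z > 0`, induction gives `z ≤ C^r`, so in the unimodular coordinates of a single facet the whole of
`Q*` fits into a box of side `C^r`.
-/

open scoped Matrix Topology Pointwise

theorem exists_mem_extremePoints_isMinOn {E : Type*} [AddCommGroup E] [Module ℝ E]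
    [TopologicalSpace E] [T2Space E] [IsTopologicalAddGroup E] [ContinuousSMul ℝ E]
    [LocallyConvexSpace ℝ E] {K : Set E} (hK : IsCompact K) (hne : K.Nonempty)
    (l : StrongDual ℝ E) : ∃ u ∈ K.extremePoints ℝ, IsMinOn l K u := by
  obtain ⟨x, hxK, hx⟩ := hK.exists_isMaxOn hne (-l).continuous.continuousOn
  have hface : IsExposed ℝ K ((-l).toExposed K) := ContinuousLinearMap.toExposed.isExposed
  obtain ⟨u, hu⟩ := (hface.isCompact hK).extremePoints_nonempty ⟨x, hxK, hx⟩
  exact ⟨u, hface.isExtreme.extremePoints_subset_extremePoints hu,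
    fun y hy => neg_le_neg_iff.1 (hu.1.2 y hy)⟩

section Convex

variable {K V : Type*} [Field K] [LinearOrder K] [IsStrictOrderedRing K] [AddCommGroup V]
  [Module K V] {Q s : Set V}

theorem mem_smul_of_mem_hull (hQ : Convex K Q) (hne : Q.Nonempty) (hsQ : s ⊆ Q)
    {l : Module.Dual K V} (hl : ∀ x ∈ s, l x = 1) {x : V} (hx : x ∈ PointedCone.hull K s) :
    0 ≤ l x ∧ x ∈ l x • Q := by
  induction hx using Submodule.span_induction with
  | mem x hx => simpa [hl x hx] using hsQ hx
  | zero => simp [Set.zero_smul_set hne]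
  | add x y _ _ hx hy =>
    rw [map_add, hQ.add_smul hx.1 hy.1]
    exact ⟨add_nonneg hx.1 hy.1, Set.add_mem_add hx.2 hy.2⟩
  | smul c x _ hx =>
    rw [Nonneg.mk_smul, map_smul, smul_eq_mul, mul_smul]
    exact ⟨mul_nonneg c.2 hx.1, Set.smul_mem_smul_set hx.2⟩

theorem one_le_of_mem_smul_of_mem_extremePoints (h0 : 0 ∈ Q) {t : V} (ht : t ∈ Q.extremePoints K)
    (ht0 : t ≠ 0) {c : K} (hc : 0 ≤ c) (htc : t ∈ c • Q) : 1 ≤ c := by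
  obtain ⟨q, hq, rfl⟩ := htc
  by_contra! hlt
  have hc0 : 0 < c := hc.lt_of_ne' (left_ne_zero_of_smul ht0)
  have hseg : c • q ∈ openSegment K 0 q := ⟨1 - c, c, sub_pos.2 hlt, hc0, by ring, by simp⟩
  exact ht0 (ht.2 h0 hq hseg).symm

end Convex

section LinearAlgebra

variable {ι R K V : Type*}

theorem apply_eq_repr_mul_of_forall_ne [CommRing K] [AddCommGroup V] [Module K V]
    (b : Module.Basis ι K V) (l : Module.Dual K V) {i : ι} (hl : ∀ j ≠ i, l (b j) = 0) (x : V) :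
    l x = b.repr x i * l (b i) := by
  have hcoord : l = l (b i) • b.coord i := b.ext fun j => by
    obtain rfl | hj := eq_or_ne j i
    · simp
    · simp [hl j hj, hj]
  rw [mul_comm, ← smul_eq_mul]
  exact DFunLike.congr_fun hcoord x

theorem mem_of_repr_nonneg [Field K] [LinearOrder K] [IsStrictOrderedRing K] [AddCommGroup V]
    [Module K V] (b : Module.Basis ι K V) (σ : PointedCone K V) {x : V}
    (hx : ∀ i, 0 ≤ b.repr x i) (hb : ∀ i, b.repr x i ≠ 0 → b i ∈ σ) : x ∈ σ := by
  rw [← b.linearCombination_repr x, Finsupp.linearCombination_apply]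
  exact sum_mem fun i hi => σ.smul_mem (hx i) (hb i (Finsupp.mem_support_iff.1 hi))

/- The cones spanned by `n` of the `n + 1` vectors `h, b₁, …, bₙ` form a complete fan as soon as
`-h` lies in the open cone spanned by the `bᵢ`. -/
theorem mem_hull_range_or_exists_mem_hull_insert [Finite ι] [Field K] [LinearOrder K]
    [IsStrictOrderedRing K] [AddCommGroup V] [Module K V] (b : Module.Basis ι K V) {h : V}
    (hh : ∀ i, b.repr h i < 0) (x : V) :
    x ∈ PointedCone.hull K (Set.range b) ∨
      ∃ i, x ∈ PointedCone.hull K (insert h (b '' {i}ᶜ)) := by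
  by_cases hx : ∀ i, 0 ≤ b.repr x i
  · exact .inl <| mem_of_repr_nonneg b _ hx fun i _ =>
      PointedCone.subset_hull (Set.mem_range_self i)
  · push Not at hx
    obtain ⟨i₁, hi₁⟩ := hx
    have : Nonempty ι := ⟨i₁⟩
    obtain ⟨i, hi⟩ := Finite.exists_max fun j => b.repr x j / b.repr h j
    set μ := b.repr x i / b.repr h i with hμ
    have hμ_nonneg : 0 ≤ μ := (div_pos_of_neg_of_neg hi₁ (hh i₁)).le.trans (hi i₁)
    have hrepr : ∀ j, b.repr (x - μ • h) j = b.repr x j - μ * b.repr h j := by simp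
    have hrest : x - μ • h ∈ PointedCone.hull K (insert h (b '' {i}ᶜ)) := by
      refine mem_of_repr_nonneg b _ (fun j => ?_) fun j hj => ?_
      · rw [hrepr, sub_nonneg]
        exact (div_le_iff_of_neg (hh j)).1 (hi j)
      · refine PointedCone.subset_hull (.inr ⟨j, ?_, rfl⟩)
        rintro rfl
        exact hj (by rw [hrepr, hμ, div_mul_cancel₀ _ (hh j).ne, sub_self])
    refine .inr ⟨i, ?_⟩
    rw [← sub_add_cancel x (μ • h)]
    exact add_mem hrest <|
      PointedCone.smul_mem _ hμ_nonneg (PointedCone.subset_hull (Set.mem_insert _ _))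

variable [Fintype ι] [DecidableEq ι] [CommRing R] [CommRing K]

/-- The basis of `Kⁿ` formed by the rows of a matrix with invertible determinant. -/
noncomputable def rowBasis (M : Matrix ι ι K) (hM : IsUnit M.det) : Module.Basis ι K (ι → K) :=
  .ofEquivFun (Matrix.toLinearEquivRight'OfInv (M.mul_nonsing_inv hM) (M.nonsing_inv_mul hM))

theorem rowBasis_apply (M : Matrix ι ι K) (hM : IsUnit M.det) (i : ι) : rowBasis M hM i = M i := by
  rw [rowBasis, Module.Basis.coe_ofEquivFun]
  simp [Matrix.toLinearEquivRight'OfInv, Matrix.row]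

theorem exists_rowBasis_repr_eq (φ : R →+* K) (M : Matrix ι ι R) (hM : IsUnit M.det)
    (hM' : IsUnit (M.map φ).det) (p : ι → R) (j : ι) :
    ∃ z : R, (rowBasis (M.map φ) hM').repr (φ ∘ p) j = φ z := by
  obtain ⟨c, rfl⟩ := Matrix.vecMul_surjective_iff_isUnit.2 ((M.isUnit_iff_isUnit_det).2 hM) p
  have hsum : φ ∘ (c ᵥ* M) = ∑ i, φ (c i) • rowBasis (M.map φ) hM' i := by
    ext k
    simp [Matrix.vecMul, dotProduct, rowBasis_apply]
  exact ⟨c j, by rw [hsum, Module.Basis.repr_sum_self]⟩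

end LinearAlgebra

section DualSet

variable {n : ℕ}

theorem zero_mem_dualSet (Q : Set (Fin n → ℝ)) : 0 ∈ dualSet n Q := fun u _ => by simp

theorem mem_dualSet_convexHull {s : Set (Fin n → ℝ)} {x : Fin n → ℝ} :
    x ∈ dualSet n (convexHull ℝ s) ↔ ∀ u ∈ s, -1 ≤ x ⬝ᵥ u := by
  refine ⟨fun hx u hu => hx u (subset_convexHull ℝ s hu), fun hx => ?_⟩
  exact convexHull_min (t := {u | -1 ≤ x ⬝ᵥ u}) hx
    (convex_halfSpace_ge (dotProductBilin ℝ ℝ x).isLinear (-1))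

theorem isClosed_dualSet (Q : Set (Fin n → ℝ)) : IsClosed (dualSet n Q) := by
  simp only [dualSet, Set.ofPred_forall]
  exact isClosed_biInter fun u _ => isClosed_le continuous_const (by fun_prop)

theorem isCompact_dualSet {Q : Set (Fin n → ℝ)} (h0 : 0 ∈ interior Q) :
    IsCompact (dualSet n Q) := by
  obtain ⟨δ, hδ, hball⟩ :=
    Metric.nhds_basis_closedBall.mem_iff.1 (mem_interior_iff_mem_nhds.1 h0)
  have hsingle : ∀ x ∈ dualSet n Q, ∀ i t, |t| = δ → -1 ≤ x i * t := by
    intro x hx i t ht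
    have hmem : Pi.single i t ∈ Q := hball (by simp [Pi.norm_single, ht])
    exact (hx _ hmem).trans_eq (dotProduct_single x t i)
  refine Metric.isCompact_of_isClosed_isBounded (isClosed_dualSet Q) <|
    (Metric.isBounded_Icc (fun _ => -(1 / δ)) fun _ => 1 / δ).subset fun x hx => ⟨?_, ?_⟩
  all_goals
    intro i
    have hpos := hsingle x hx i δ (abs_of_pos hδ)
    have hneg := hsingle x hx i (-δ) (by rw [abs_neg, abs_of_pos hδ])
  · rw [← neg_div, div_le_iff₀ hδ]
    exact hpos
  · rw [le_div_iff₀ hδ]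
    linarith

theorem exists_mem_extremePoints_dualSet_isMinOn {Q : Set (Fin n → ℝ)} (h0 : 0 ∈ interior Q)
    (p : Fin n → ℝ) :
    ∃ u ∈ (dualSet n Q).extremePoints ℝ, IsMinOn (· ⬝ᵥ p) (dualSet n Q) u := by
  simp only [dotProduct_comm _ p]
  exact exists_mem_extremePoints_isMinOn (isCompact_dualSet h0) ⟨0, zero_mem_dualSet Q⟩
    (dotProductEquiv ℝ (Fin n) p).toContinuousLinearMap

theorem dotProduct_le_of_forall_extremePoints {Q : Set (Fin n → ℝ)} (h0 : 0 ∈ interior Q)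
    {p : Fin n → ℝ} {c : ℝ} (hc : ∀ v ∈ (dualSet n Q).extremePoints ℝ, v ⬝ᵥ p ≤ c)
    {x : Fin n → ℝ} (hx : x ∈ dualSet n Q) : x ⬝ᵥ p ≤ c := by
  obtain ⟨v, hv, hmin⟩ := exists_mem_extremePoints_dualSet_isMinOn h0 (-p)
  have hle : v ⬝ᵥ -p ≤ x ⬝ᵥ -p := hmin hx
  rw [dotProduct_neg, dotProduct_neg, neg_le_neg_iff] at hle
  exact hle.trans (hc v hv)

end DualSet

section FacetVertices

variable {n : ℕ} {S : Finset (Fin n → ℝ)} {u p d t : Fin n → ℝ}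

/-- The dual `Q*` of the polytope `Q` spanned by a finite set. -/
abbrev dualPolytope (S : Finset (Fin n → ℝ)) : Set (Fin n → ℝ) :=
  dualSet n (convexHull ℝ (S : Set (Fin n → ℝ)))

/-- The elements of `S` on the hyperplane `⟨u, ·⟩ = -1`. When `S` is the vertex set of a polytope
`Q` and `u ∈ Q*`, they are the vertices of the face `F_u` of `Q`. -/
noncomputable def facetVertices (S : Finset (Fin n → ℝ)) (u : Fin n → ℝ) : Finset (Fin n → ℝ) :=
  {s ∈ S | u ⬝ᵥ s = -1}

theorem mem_facetVertices {s : Fin n → ℝ} : s ∈ facetVertices S u ↔ s ∈ S ∧ u ⬝ᵥ s = -1 := by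
  simp [facetVertices]

-- Otherwise `u + ε d` would stay in the dual set for small `ε > 0` and have a smaller value at `p`.
theorem dotProduct_nonneg_of_isMinOn (hu : u ∈ dualPolytope S)
    (hmin : IsMinOn (· ⬝ᵥ p) (dualPolytope S) u)
    (hd : ∀ s ∈ facetVertices S u, 0 ≤ d ⬝ᵥ s) : 0 ≤ d ⬝ᵥ p := by
  by_contra! hneg
  have hconstraint : ∀ s ∈ S, ∀ᶠ ε in 𝓝[>] (0 : ℝ), -1 ≤ (u + ε • d) ⬝ᵥ s := by
    intro s hs
    simp only [add_dotProduct, smul_dotProduct, smul_eq_mul]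
    rcases (mem_dualSet_convexHull.1 hu s hs).eq_or_lt with htight | hslack
    · filter_upwards [self_mem_nhdsWithin] with ε hε
      have := mul_nonneg (le_of_lt hε) (hd s (mem_facetVertices.2 ⟨hs, htight.symm⟩))
      linarith
    · have hcont : Continuous fun ε : ℝ => u ⬝ᵥ s + ε * (d ⬝ᵥ s) := by fun_prop
      have hnear : ∀ᶠ ε in 𝓝 (0 : ℝ), -1 < u ⬝ᵥ s + ε * (d ⬝ᵥ s) :=
        hcont.tendsto' 0 (u ⬝ᵥ s) (by simp) |>.eventually (lt_mem_nhds hslack)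
      exact (hnear.filter_mono nhdsWithin_le_nhds).mono fun ε hε => hε.le
  obtain ⟨ε, hmem, hε⟩ :=
    (((Finset.eventually_all S).2 hconstraint).and self_mem_nhdsWithin).exists
  have hle : u ⬝ᵥ p ≤ (u + ε • d) ⬝ᵥ p := hmin (mem_dualSet_convexHull.2 hmem)
  rw [add_dotProduct, smul_dotProduct, smul_eq_mul] at hle
  linarith [mul_neg_of_pos_of_neg hε hneg]

theorem mem_facetVertices_of_mem_hull
    (h0 : 0 ∈ convexHull ℝ (S : Set (Fin n → ℝ)))
    (hu : u ∈ dualPolytope S) (htS : t ∈ S) (ht0 : t ≠ 0)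
    (ht : t ∈ (convexHull ℝ (S : Set (Fin n → ℝ))).extremePoints ℝ)
    (hcone : t ∈ PointedCone.hull ℝ (facetVertices S u : Set (Fin n → ℝ))) :
    t ∈ facetVertices S u := by
  obtain ⟨hnonneg, hsmul⟩ := mem_smul_of_mem_hull (l := -dotProductEquiv ℝ (Fin n) u)
    (convex_convexHull ℝ _) ⟨0, h0⟩
    (fun s hs => subset_convexHull ℝ _ (mem_facetVertices.1 hs).1)
    (fun s hs => by simp [(mem_facetVertices.1 hs).2]) hcone
  have hle : 1 ≤ -(u ⬝ᵥ t) := one_le_of_mem_smul_of_mem_extremePoints h0 ht ht0 hnonneg hsmul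
  exact mem_facetVertices.2
    ⟨htS, (le_neg_of_le_neg hle).antisymm (mem_dualSet_convexHull.1 hu t htS)⟩

end FacetVertices

section UnimodularFacet

/-- The lattice `ℤⁿ` inside `ℝⁿ`. -/
def integerLattice (n : ℕ) : AddSubgroup (Fin n → ℝ) :=
  ((Int.castAddHom ℝ).compLeft (Fin n)).range

/-- The vertices of `S` on the hyperplane `⟨v, ·⟩ = -1` are listed by `e`, without repetition, and
their multiples `a(eᵢ)eᵢ` form a basis of the lattice `ℤⁿ`. The basis property is encoded by the
integer matrix `M` with rows `a(eᵢ)eᵢ`, whose determinant has to be a unit. -/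
structure IsUnimodularFacet {n : ℕ} (S : Finset (Fin n → ℝ)) (a : (Fin n → ℝ) → ℤ)
    (v : Fin n → ℝ) (e : Fin n → Fin n → ℝ) (M : Matrix (Fin n) (Fin n) ℤ) : Prop where
  injective : Function.Injective e
  mem : ∀ i, e i ∈ S
  dotProduct_eq_iff : ∀ s ∈ S, v ⬝ᵥ s = -1 ↔ ∃ i, e i = s
  coe_row : ∀ i j, ((M i j : ℤ) : ℝ) = (a (e i) : ℝ) * e i j
  isUnit_det : IsUnit M.det

namespace IsUnimodularFacet

variable {n : ℕ} {S : Finset (Fin n → ℝ)} {a : (Fin n → ℝ) → ℤ} {v p : Fin n → ℝ}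
  {e : Fin n → Fin n → ℝ} {M : Matrix (Fin n) (Fin n) ℤ}

theorem facetVertices_eq (h : IsUnimodularFacet S a v e M) :
    facetVertices S v = Finset.univ.image e := by
  ext s
  simp only [mem_facetVertices, Finset.mem_image, Finset.mem_univ, true_and]
  refine ⟨fun hs => (h.dotProduct_eq_iff s hs.1).1 hs.2, ?_⟩
  rintro ⟨i, rfl⟩
  exact ⟨h.mem i, (h.dotProduct_eq_iff _ (h.mem i)).2 ⟨i, rfl⟩⟩

theorem mem_facetVertices (h : IsUnimodularFacet S a v e M) (i : Fin n) :
    e i ∈ facetVertices S v := by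
  rw [h.facetVertices_eq]
  exact Finset.mem_image_of_mem e (Finset.mem_univ i)

theorem card_facetVertices (h : IsUnimodularFacet S a v e M) : (facetVertices S v).card = n := by
  rw [h.facetVertices_eq, Finset.card_image_of_injective _ h.injective, Finset.card_fin]

theorem isUnit_det_map (h : IsUnimodularFacet S a v e M) :
    IsUnit (M.map (Int.castRingHom ℝ)).det := by
  have hunit := h.isUnit_det.map (Int.castRingHom ℝ)
  rwa [RingHom.map_det] at hunit

/-- The basis `a(e₁)e₁, …, a(eₙ)eₙ` of `ℝⁿ` attached to a unimodular facet. -/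
noncomputable def basis (h : IsUnimodularFacet S a v e M) : Module.Basis (Fin n) ℝ (Fin n → ℝ) :=
  rowBasis (M.map (Int.castRingHom ℝ)) h.isUnit_det_map

theorem basis_apply (h : IsUnimodularFacet S a v e M) (i : Fin n) :
    h.basis i = (a (e i) : ℝ) • e i := by
  ext j
  rw [basis, rowBasis_apply]
  exact h.coe_row i j

theorem basis_mem_integerLattice (h : IsUnimodularFacet S a v e M) (i : Fin n) :
    h.basis i ∈ integerLattice n := by
  rw [basis, rowBasis_apply]
  exact ⟨M i, rfl⟩

theorem basis_mem_of_vertex_mem (h : IsUnimodularFacet S a v e M) (ha : ∀ s ∈ S, 0 < a s)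
    {σ : PointedCone ℝ (Fin n → ℝ)} {i : Fin n} (hi : e i ∈ σ) : h.basis i ∈ σ := by
  rw [h.basis_apply]
  exact σ.smul_mem (mod_cast (ha _ (h.mem i)).le) hi

theorem repr_vertex_nonneg (h : IsUnimodularFacet S a v e M) (ha : ∀ s ∈ S, 0 < a s)
    (i j : Fin n) : 0 ≤ h.basis.repr (e i) j := by
  have hai : (0 : ℝ) < a (e i) := mod_cast ha _ (h.mem i)
  have hmul : (a (e i) : ℝ) * h.basis.repr (e i) j = Finsupp.single i 1 j := by
    rw [← h.basis.repr_self, h.basis_apply, map_smul, Finsupp.smul_apply, smul_eq_mul]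
  refine nonneg_of_mul_nonneg_right ?_ hai
  rw [hmul, Finsupp.single_apply]
  positivity

theorem repr_nonneg_of_isMinOn (h : IsUnimodularFacet S a v e M) (ha : ∀ s ∈ S, 0 < a s)
    (hv : v ∈ dualPolytope S) (hmin : IsMinOn (· ⬝ᵥ p) (dualPolytope S) v) (j : Fin n) :
    0 ≤ h.basis.repr p j := by
  obtain ⟨d, hd⟩ := (dotProductEquiv ℝ (Fin n)).surjective (h.basis.coord j)
  have hcoord : ∀ x, d ⬝ᵥ x = h.basis.repr x j := fun x => DFunLike.congr_fun hd x
  rw [← hcoord]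
  refine dotProduct_nonneg_of_isMinOn hv hmin fun s hs => ?_
  rw [h.facetVertices_eq, Finset.mem_image] at hs
  obtain ⟨i, -, rfl⟩ := hs
  rw [hcoord]
  exact h.repr_vertex_nonneg ha i j

theorem exists_repr_eq_natCast_of_isMinOn (h : IsUnimodularFacet S a v e M)
    (ha : ∀ s ∈ S, 0 < a s) (hv : v ∈ dualPolytope S) (hp : p ∈ integerLattice n)
    (hmin : IsMinOn (· ⬝ᵥ p) (dualPolytope S) v) (j : Fin n) :
    ∃ c : ℕ, h.basis.repr p j = c := by
  obtain ⟨q, rfl⟩ := hp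
  obtain ⟨z, hz⟩ :=
    exists_rowBasis_repr_eq (Int.castRingHom ℝ) M h.isUnit_det h.isUnit_det_map q j
  change h.basis.repr _ j = (z : ℝ) at hz
  have hz0 : 0 ≤ z := by
    have hnonneg := h.repr_nonneg_of_isMinOn ha hv hmin j
    exact_mod_cast hz.symm ▸ hnonneg
  lift z to ℕ using hz0
  exact ⟨z, hz⟩

theorem repr_neg_of_exchange {w x : Fin n → ℝ} (h : IsUnimodularFacet S a v e M) {i : Fin n}
    (ha : 0 < a (e i)) (hvx : -1 < v ⬝ᵥ x) (hw : w ∈ dualPolytope S) (hwx : w ⬝ᵥ x = -1)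
    (hwe : ∀ j ≠ i, w ⬝ᵥ e j = -1) : h.basis.repr x i < 0 := by
  have hve : ∀ j, v ⬝ᵥ e j = -1 := fun j => (_root_.mem_facetVertices.1 (h.mem_facetVertices j)).2
  have hx : (w - v) ⬝ᵥ x = h.basis.repr x i * ((w - v) ⬝ᵥ h.basis i) :=
    apply_eq_repr_mul_of_forall_ne h.basis (dotProductEquiv ℝ (Fin n) (w - v))
      (fun j hj => by simp [h.basis_apply, hve, hwe j hj]) x
  have hpos : 0 ≤ (w - v) ⬝ᵥ h.basis i := by
    have hwi := mem_dualSet_convexHull.1 hw _ (h.mem i)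
    rw [h.basis_apply, dotProduct_smul, sub_dotProduct, hve, smul_eq_mul]
    exact mul_nonneg (mod_cast ha.le) (by linarith)
  refine neg_of_mul_neg_left ?_ hpos
  rw [← hx, sub_dotProduct, hwx]
  linarith

end IsUnimodularFacet

end UnimodularFacet

section FacetDistance

variable {n : ℕ} {S T : Finset (Fin n → ℝ)} {a : (Fin n → ℝ) → ℤ} {v s : Fin n → ℝ}

/-- The distance of `s` from the hyperplane `⟨v, ·⟩ = -1` in the scale of the functional
`⟨v, ·⟩`, weighted by `a s`. Bounding it for all `s` bounds `v`. -/
def facetDistance (a : (Fin n → ℝ) → ℤ) (v s : Fin n → ℝ) : ℝ := a s * (1 + v ⬝ᵥ s)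

theorem facetDistance_nonneg (has : 0 < a s) (hv : v ∈ dualPolytope S) (hs : s ∈ S) :
    0 ≤ facetDistance a v s :=
  mul_nonneg (mod_cast has.le) (neg_le_iff_add_nonneg'.1 (mem_dualSet_convexHull.1 hv s hs))

theorem facetDistance_eq_zero_of_mem_facetVertices (hs : s ∈ facetVertices S v) :
    facetDistance a v s = 0 := by
  simp [facetDistance, (mem_facetVertices.1 hs).2]

theorem facetDistance_pos_iff (has : 0 < a s) (hv : v ∈ dualPolytope S) (hs : s ∈ S) :
    0 < facetDistance a v s ↔ s ∉ facetVertices S v := by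
  have ha : (a s : ℝ) ≠ 0 := mod_cast has.ne'
  rw [(facetDistance_nonneg has hv hs).lt_iff_ne', not_iff_not, mem_facetVertices, facetDistance,
    mul_eq_zero_iff_left ha, add_eq_zero_iff_neg_eq, eq_comm, and_iff_right hs]

theorem sum_facetDistance_eq {ι : Type*} [Fintype ι] {f : ι → Fin n → ℝ} {c : ι → ℕ}
    (hrel : ∑ s ∈ T, (a s : ℝ) • s = ∑ j, ((c j : ℝ) * a (f j)) • f j) (v : Fin n → ℝ) :
    ∑ s ∈ T, facetDistance a v s =
      ∑ j, c j * facetDistance a v (f j) + (∑ s ∈ T, (a s : ℝ) - ∑ j, (c j : ℝ) * a (f j)) := by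
  have hv := congrArg (v ⬝ᵥ ·) hrel
  simp only [dotProduct_sum, dotProduct_smul, smul_eq_mul] at hv
  simp only [facetDistance, mul_add, mul_one, Finset.sum_add_distrib, hv, mul_assoc]
  ring

theorem IsUnimodularFacet.mulVec_add_eq_facetDistance {e : Fin n → Fin n → ℝ}
    {M : Matrix (Fin n) (Fin n) ℤ} (h : IsUnimodularFacet S a v e M) (x : Fin n → ℝ) (i : Fin n) :
    (M.map (Int.castRingHom ℝ) *ᵥ x) i + a (e i) = facetDistance a x (e i) := by
  have hrow : M.map (Int.castRingHom ℝ) i = (a (e i) : ℝ) • e i := funext (h.coe_row i)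
  rw [Matrix.mulVec, hrow, smul_dotProduct, dotProduct_comm, facetDistance, smul_eq_mul]
  ring

end FacetDistance

section Recursion

theorem nonneg_of_forall_sum_le {α : Type*} {S : Finset α} {w : α → ℝ} {n : ℕ} {C : ℝ}
    (hC : ∀ T ⊆ S, T.card ≤ n → ∑ s ∈ T, w s ≤ C) : 0 ≤ C := by
  simpa using hC ∅ (Finset.empty_subset S)

-- A value of `z` is bounded in terms of strictly smaller ones, which costs a factor `C` per value.
theorem le_pow_of_recursion {α ι : Type*} [Fintype ι] {S : Finset α} {z : α → ℝ} {C : ℝ}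
    (hz : ∀ s ∈ S, 0 ≤ z s)
    (hrec : ∀ h ∈ S, 0 < z h → ∃ (f : ι → α) (c : ι → ℕ) (d : ℝ), (∀ j, f j ∈ S) ∧ 1 ≤ d ∧
      z h = ∑ j, c j * z (f j) + d ∧ ∑ j, (c j : ℝ) + d ≤ C)
    (k : ℕ) {h : α} (hh : h ∈ S) (hpos : 0 < z h)
    (hk : {s ∈ S | 0 < z s ∧ z s < z h}.card < k) : z h ≤ C ^ k := by
  induction k generalizing h with
  | zero => exact absurd hk (Nat.not_lt_zero _)
  | succ k ih =>
    obtain ⟨f, c, d, hfS, hd, hzh, hC⟩ := hrec h hh hpos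
    have hsum : 0 ≤ ∑ j, (c j : ℝ) := by positivity
    have hCk : 1 ≤ C ^ k := one_le_pow₀ (by linarith)
    have hterm : ∀ j, c j * z (f j) ≤ c j * C ^ k := by
      intro j
      rcases (c j).eq_zero_or_pos with hcj | hcj
      · simp [hcj]
      refine mul_le_mul_of_nonneg_left ?_ (c j).cast_nonneg
      rcases (hz _ (hfS j)).eq_or_lt with hfj | hfj
      · exact hfj ▸ zero_le_one.trans hCk
      have hlt : z (f j) < z h := by
        calc z (f j) ≤ c j * z (f j) := le_mul_of_one_le_left hfj.le (mod_cast hcj)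
          _ ≤ ∑ j, c j * z (f j) :=
            Finset.single_le_sum (f := fun j => c j * z (f j))
              (fun i _ => mul_nonneg (c i).cast_nonneg (hz _ (hfS i))) (Finset.mem_univ j)
          _ < z h := by linarith
      refine ih (hfS j) hfj ((Finset.card_lt_card ?_).trans_le (Nat.lt_succ_iff.1 hk))
      refine Finset.ssubset_iff_of_subset (Finset.monotone_filter_right S fun s _ hs => ?_) |>.2
        ⟨f j, by simp [hfS j, hfj, hlt], by simp⟩
      exact ⟨hs.1, hs.2.trans hlt⟩
    calc z h ≤ (∑ j, (c j : ℝ)) * C ^ k + d * C ^ k := by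
          rw [hzh, Finset.sum_mul]
          exact add_le_add (Finset.sum_le_sum fun j _ => hterm j)
            (le_mul_of_one_le_right (by linarith) hCk)
      _ = (∑ j, (c j : ℝ) + d) * C ^ k := by ring
      _ ≤ C * C ^ k := by gcongr
      _ = C ^ (k + 1) := (pow_succ' C k).symm

end Recursion

section WeightedReflexive

variable {n : ℕ} {S T : Finset (Fin n → ℝ)} {a : (Fin n → ℝ) → ℤ} {v w h t : Fin n → ℝ}

/-- `S` is the vertex set of a polytope with `0` in its interior, `a` assigns positive weights to
the vertices, and all facets are unimodular with respect to `a`. This is the combinatorial part of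
the `G/H`-reflexive polytope of a locally factorial Fano horospherical embedding. -/
structure IsWeightedReflexive (S : Finset (Fin n → ℝ)) (a : (Fin n → ℝ) → ℤ) : Prop where
  extremePoints_eq : (convexHull ℝ (S : Set (Fin n → ℝ))).extremePoints ℝ = S
  zero_mem_interior : 0 ∈ interior (convexHull ℝ (S : Set (Fin n → ℝ)))
  weight_pos : ∀ s ∈ S, 0 < a s
  exists_facet : ∀ v ∈ (dualPolytope S).extremePoints ℝ, ∃ e M, IsUnimodularFacet S a v e M

/-- `T` is a nonface of the polytope with vertex set `S`: it is not contained in a facet. The facets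
are indexed by the extreme points of the dual polytope. -/
def IsNonface (S T : Finset (Fin n → ℝ)) : Prop :=
  ∀ u ∈ (dualPolytope S).extremePoints ℝ, ¬T ⊆ facetVertices S u

namespace IsWeightedReflexive

theorem card_facetVertices (hS : IsWeightedReflexive S a)
    (hv : v ∈ (dualPolytope S).extremePoints ℝ) : (facetVertices S v).card = n := by
  obtain ⟨e, M, hfacet⟩ := hS.exists_facet v hv
  exact hfacet.card_facetVertices

theorem mem_extremePoints (hS : IsWeightedReflexive S a) {s : Fin n → ℝ} (hs : s ∈ S) :
    s ∈ (convexHull ℝ (S : Set (Fin n → ℝ))).extremePoints ℝ := by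
  rwa [hS.extremePoints_eq]

theorem ne_zero [NeZero n] (hS : IsWeightedReflexive S a) {s : Fin n → ℝ} (hs : s ∈ S) :
    s ≠ 0 := by
  rintro rfl
  exact (disjoint_interior_extremePoints _).notMem_of_mem_left hS.zero_mem_interior
    (hS.mem_extremePoints hs)

theorem mem_facetVertices_of_mem_hull [NeZero n] (hS : IsWeightedReflexive S a)
    (hv : v ∈ dualPolytope S) {s : Fin n → ℝ} (hs : s ∈ S)
    (hcone : s ∈ PointedCone.hull ℝ (facetVertices S v : Set (Fin n → ℝ))) :
    s ∈ facetVertices S v :=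
  _root_.mem_facetVertices_of_mem_hull (interior_subset hS.zero_mem_interior) hv hs
    (hS.ne_zero hs) (hS.mem_extremePoints hs) hcone

theorem facetVertices_eq_of_exchange (hS : IsWeightedReflexive S a)
    (hv : v ∈ (dualPolytope S).extremePoints ℝ) (hw : w ∈ (dualPolytope S).extremePoints ℝ)
    (ht : t ∈ facetVertices S v) (hh : h ∉ facetVertices S v)
    (hsub : insert h ((facetVertices S v).erase t) ⊆ facetVertices S w) :
    facetVertices S w = insert h ((facetVertices S v).erase t) := by
  refine (Finset.eq_of_subset_of_card_le hsub ?_).symm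
  rw [Finset.card_insert_of_notMem (fun hmem => hh (Finset.mem_of_mem_erase hmem)),
    Finset.card_erase_add_one ht, hS.card_facetVertices hv, hS.card_facetVertices hw]

/- The cone over the facet `v` and its exchanges cover the whole space, and each of them contains no
vertices other than its generators. -/
theorem subset_insert_of_forall_exchange [NeZero n] (hS : IsWeightedReflexive S a)
    (hv : v ∈ (dualPolytope S).extremePoints ℝ) (hhS : h ∈ S) (hh : h ∉ facetVertices S v)
    (hex : ∀ t ∈ facetVertices S v, ∃ w ∈ (dualPolytope S).extremePoints ℝ,
      insert h ((facetVertices S v).erase t) ⊆ facetVertices S w) :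
    S ⊆ insert h (facetVertices S v) := by
  obtain ⟨e, M, hfacet⟩ := hS.exists_facet v hv
  choose w hw hsub using fun i => hex (e i) (hfacet.mem_facetVertices i)
  have hwh : ∀ i, h ∈ facetVertices S (w i) := fun i => hsub i (Finset.mem_insert_self _ _)
  have hwe : ∀ i, ∀ j ≠ i, e j ∈ facetVertices S (w i) := fun i j hj =>
    hsub i <| Finset.mem_insert_of_mem <| Finset.mem_erase.2
      ⟨hfacet.injective.ne hj, hfacet.mem_facetVertices j⟩
  have hvh : -1 < v ⬝ᵥ h := (mem_dualSet_convexHull.1 hv.1 h hhS).lt_of_ne' fun hvh =>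
    hh (mem_facetVertices.2 ⟨hhS, hvh⟩)
  have hneg : ∀ i, hfacet.basis.repr h i < 0 := fun i =>
    hfacet.repr_neg_of_exchange (hS.weight_pos _ (hfacet.mem i)) hvh (hw i).1
      (mem_facetVertices.1 (hwh i)).2 fun j hj => (mem_facetVertices.1 (hwe i j hj)).2
  intro t ht
  rcases mem_hull_range_or_exists_mem_hull_insert hfacet.basis hneg t with hcone | ⟨i, hcone⟩
  · refine Finset.mem_insert_of_mem <|
      hS.mem_facetVertices_of_mem_hull hv.1 ht (Submodule.span_le.2 ?_ hcone)
    rintro _ ⟨i, rfl⟩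
    exact hfacet.basis_mem_of_vertex_mem hS.weight_pos
      (PointedCone.subset_hull (hfacet.mem_facetVertices i))
  · have htw : t ∈ facetVertices S (w i) := by
      refine hS.mem_facetVertices_of_mem_hull (hw i).1 ht (Submodule.span_le.2 ?_ hcone)
      rintro _ (rfl | ⟨j, hj, rfl⟩)
      · exact PointedCone.subset_hull (hwh i)
      · exact hfacet.basis_mem_of_vertex_mem hS.weight_pos (PointedCone.subset_hull (hwe i j hj))
    rw [hS.facetVertices_eq_of_exchange hv (hw i) (hfacet.mem_facetVertices i) hh (hsub i)] at htw
    exact Finset.insert_subset_insert h (Finset.erase_subset _ _) htw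

theorem exists_isNonface_exchange [NeZero n] (hS : IsWeightedReflexive S a)
    (hcard : n + 2 ≤ S.card) (hv : v ∈ (dualPolytope S).extremePoints ℝ) (hhS : h ∈ S)
    (hh : h ∉ facetVertices S v) :
    ∃ t ∈ facetVertices S v, IsNonface S (insert h ((facetVertices S v).erase t)) := by
  by_contra! hcon
  have hsub : S ⊆ insert h (facetVertices S v) :=
    hS.subset_insert_of_forall_exchange hv hhS hh fun t ht => by
      simpa only [IsNonface, not_forall, not_not, exists_prop] using hcon t ht
  have hle := Finset.card_le_card hsub
  rw [Finset.card_insert_of_notMem hh, hS.card_facetVertices hv] at hle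
  omega

theorem smul_mem_integerLattice [NeZero n] (hS : IsWeightedReflexive S a) {s : Fin n → ℝ}
    (hs : s ∈ S) : (a s : ℝ) • s ∈ integerLattice n := by
  obtain ⟨u, hu, hmin⟩ := exists_mem_extremePoints_dualSet_isMinOn hS.zero_mem_interior s
  obtain ⟨e, M, hfacet⟩ := hS.exists_facet u hu
  have htight : s ∈ facetVertices S u := by
    refine hS.mem_facetVertices_of_mem_hull hu.1 hs <| mem_of_repr_nonneg hfacet.basis _
      (hfacet.repr_nonneg_of_isMinOn hS.weight_pos hu.1 hmin) fun i _ => ?_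
    exact hfacet.basis_mem_of_vertex_mem hS.weight_pos
      (PointedCone.subset_hull (hfacet.mem_facetVertices i))
  obtain ⟨i, rfl⟩ := (hfacet.dotProduct_eq_iff s hs).1 (mem_facetVertices.1 htight).2
  exact hfacet.basis_apply i ▸ hfacet.basis_mem_integerLattice i

theorem exists_relation_of_isNonface [NeZero n] (hS : IsWeightedReflexive S a) (hTS : T ⊆ S)
    (hT : IsNonface S T) : ∃ (f : Fin n → Fin n → ℝ) (c : Fin n → ℕ), (∀ j, f j ∈ S) ∧
      ∑ s ∈ T, (a s : ℝ) • s = ∑ j, ((c j : ℝ) * a (f j)) • f j ∧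
      ∑ j, (c j : ℤ) * a (f j) < ∑ s ∈ T, a s := by
  have hp : ∑ s ∈ T, (a s : ℝ) • s ∈ integerLattice n :=
    sum_mem fun s hs => hS.smul_mem_integerLattice (hTS hs)
  obtain ⟨u, hu, hmin⟩ := exists_mem_extremePoints_dualSet_isMinOn hS.zero_mem_interior
    (∑ s ∈ T, (a s : ℝ) • s)
  obtain ⟨e, M, hfacet⟩ := hS.exists_facet u hu
  choose c hc using hfacet.exists_repr_eq_natCast_of_isMinOn hS.weight_pos hu.1 hp hmin
  have hrel : ∑ s ∈ T, (a s : ℝ) • s = ∑ j, ((c j : ℝ) * a (e j)) • e j := by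
    rw [← hfacet.basis.sum_repr (∑ s ∈ T, (a s : ℝ) • s)]
    simp only [hc, hfacet.basis_apply, smul_smul]
  obtain ⟨t, htT, ht⟩ := Finset.not_subset.1 (hT u hu)
  have hpos : 0 < ∑ s ∈ T, facetDistance a u s :=
    Finset.sum_pos' (fun s hs => facetDistance_nonneg (hS.weight_pos s (hTS hs)) hu.1 (hTS hs))
      ⟨t, htT, (facetDistance_pos_iff (hS.weight_pos t (hTS htT)) hu.1 (hTS htT)).2 ht⟩
  have hzero : ∀ j, facetDistance a u (e j) = 0 := fun j =>
    facetDistance_eq_zero_of_mem_facetVertices (hfacet.mem_facetVertices j)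
  simp only [sum_facetDistance_eq hrel, hzero, mul_zero, Finset.sum_const_zero, zero_add,
    sub_pos] at hpos
  exact ⟨e, c, hfacet.mem, hrel, mod_cast hpos⟩

theorem exists_facetDistance_eq [NeZero n] (hS : IsWeightedReflexive S a)
    (hcard : n + 2 ≤ S.card) {C : ℝ} (hC : ∀ T ⊆ S, T.card ≤ n → ∑ s ∈ T, (a s : ℝ) ≤ C)
    (hv : v ∈ (dualPolytope S).extremePoints ℝ) (hhS : h ∈ S) (hh : h ∉ facetVertices S v) :
    ∃ (f : Fin n → Fin n → ℝ) (c : Fin n → ℕ) (d : ℝ), (∀ j, f j ∈ S) ∧ 1 ≤ d ∧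
      facetDistance a v h = ∑ j, c j * facetDistance a v (f j) + d ∧
      ∑ j, (c j : ℝ) + d ≤ C := by
  obtain ⟨t, ht, hnonface⟩ := hS.exists_isNonface_exchange hcard hv hhS hh
  set T := insert h ((facetVertices S v).erase t)
  have hTS : T ⊆ S := Finset.insert_subset hhS fun s hs =>
    (mem_facetVertices.1 (Finset.mem_of_mem_erase hs)).1
  have hTn : T.card ≤ n := (Finset.card_insert_le _ _).trans_eq <| by
    rw [Finset.card_erase_add_one ht, hS.card_facetVertices hv]
  obtain ⟨f, c, hfS, hrel, hlt⟩ := hS.exists_relation_of_isNonface hTS hnonface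
  have hdist : ∑ s ∈ T, facetDistance a v s = facetDistance a v h := by
    refine Finset.sum_eq_single_of_mem h (Finset.mem_insert_self _ _) fun s hs hsh => ?_
    exact facetDistance_eq_zero_of_mem_facetVertices
      (Finset.mem_of_mem_erase (Finset.mem_of_mem_insert_of_ne hs hsh))
  refine ⟨f, c, ∑ s ∈ T, (a s : ℝ) - ∑ j, (c j : ℝ) * a (f j), hfS, ?_, ?_, ?_⟩
  · have hle := Int.add_one_le_iff.2 hlt
    rw [le_sub_iff_add_le']
    exact_mod_cast hle
  · rw [← hdist, sum_facetDistance_eq hrel]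
  · have hcoeff : ∑ j, (c j : ℝ) ≤ ∑ j, (c j : ℝ) * a (f j) :=
      Finset.sum_le_sum fun j _ => le_mul_of_one_le_right (c j).cast_nonneg
        (mod_cast hS.weight_pos _ (hfS j))
    linarith [hC T hTS hTn]

theorem facetDistance_le_pow_of_mem_extremePoints [NeZero n] (hS : IsWeightedReflexive S a) {r : ℕ}
    (hcard : S.card = n + r) (hr : 2 ≤ r) {C : ℝ}
    (hC : ∀ T ⊆ S, T.card ≤ n → ∑ s ∈ T, (a s : ℝ) ≤ C)
    (hv : v ∈ (dualPolytope S).extremePoints ℝ) (hhS : h ∈ S) :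
    facetDistance a v h ≤ C ^ r := by
  have hpos_iff : ∀ s ∈ S, 0 < facetDistance a v s ↔ s ∉ facetVertices S v := fun s hs =>
    facetDistance_pos_iff (hS.weight_pos s hs) hv.1 hs
  by_cases hh : h ∈ facetVertices S v
  · rw [facetDistance_eq_zero_of_mem_facetVertices hh]
    exact pow_nonneg (nonneg_of_forall_sum_le hC) r
  refine le_pow_of_recursion (fun s hs => facetDistance_nonneg (hS.weight_pos s hs) hv.1 hs)
    (fun s hs hpos => hS.exists_facetDistance_eq (by omega) hC hv hs ((hpos_iff s hs).1 hpos))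
    r hhS ((hpos_iff h hhS).2 hh) ?_
  have hfacet : facetVertices S v ⊆ S := Finset.filter_subset _ S
  have hcompl : (S \ facetVertices S v).card = r := by
    rw [Finset.card_sdiff_of_subset hfacet, hS.card_facetVertices hv]
    omega
  rw [← hcompl]
  refine Finset.card_lt_card <| Finset.ssubset_iff_of_subset (fun s hs => ?_) |>.2
    ⟨h, Finset.mem_sdiff.2 ⟨hhS, hh⟩, by simp⟩
  simp only [Finset.mem_filter] at hs
  exact Finset.mem_sdiff.2 ⟨hs.1, (hpos_iff s hs.1).1 hs.2.1⟩

theorem facetDistance_le_pow [NeZero n] (hS : IsWeightedReflexive S a) {r : ℕ}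
    (hcard : S.card = n + r) (hr : 2 ≤ r) {C : ℝ}
    (hC : ∀ T ⊆ S, T.card ≤ n → ∑ s ∈ T, (a s : ℝ) ≤ C) {x : Fin n → ℝ}
    (hx : x ∈ dualPolytope S) (hhS : h ∈ S) : facetDistance a x h ≤ C ^ r := by
  have hah : (0 : ℝ) < a h := mod_cast hS.weight_pos h hhS
  have hiff : ∀ y, facetDistance a y h ≤ C ^ r ↔ y ⬝ᵥ h ≤ C ^ r / a h - 1 := fun y => by
    rw [facetDistance, ← le_div_iff₀' hah, le_sub_iff_add_le']
  rw [hiff]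
  exact dotProduct_le_of_forall_extremePoints hS.zero_mem_interior (fun v hv =>
    (hiff v).1 (hS.facetDistance_le_pow_of_mem_extremePoints hcard hr hC hv hhS)) hx

end IsWeightedReflexive

end WeightedReflexive

section Volume

open MeasureTheory

theorem volume_preimage_mulVec {ι : Type*} [Fintype ι] [DecidableEq ι] {M : Matrix ι ι ℤ}
    (hM : IsUnit M.det) (s : Set (ι → ℝ)) :
    volume ((M.map (Int.castRingHom ℝ)).mulVec ⁻¹' s) = volume s := by
  have hdet : |(M.map (Int.castRingHom ℝ)).det| = 1 := by
    rw [← RingHom.mapMatrix_apply, ← RingHom.map_det, eq_intCast, ← Int.cast_abs,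
      Int.isUnit_iff_abs_eq.1 hM, Int.cast_one]
  have hne : LinearMap.det (Matrix.toLin' (M.map (Int.castRingHom ℝ))) ≠ 0 := by
    rw [LinearMap.det_toLin', ← abs_pos, hdet]
    exact one_pos
  have hvol := Measure.addHaar_preimage_linearMap volume hne s
  rwa [LinearMap.det_toLin', abs_inv, hdet, inv_one, ENNReal.ofReal_one, one_mul] at hvol

end Volume

theorem stmt4_general {n r : ℕ} {S : Finset (Fin n → ℝ)} {a : (Fin n → ℝ) → ℤ}
    (hS : IsWeightedReflexive S a) (hcard : S.card = n + r) (hr : 2 ≤ r) {C : ℝ}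
    (hC : ∀ T ⊆ S, T.card ≤ n → ∑ s ∈ T, (a s : ℝ) ≤ C) :
    MeasureTheory.volume (dualPolytope S) ≤ ENNReal.ofReal ((C ^ r) ^ n) := by
  have : NeZero n := ⟨by
    rintro rfl
    have := Finset.card_le_one_of_subsingleton S
    omega⟩
  obtain ⟨v, hv, -⟩ := exists_mem_extremePoints_dualSet_isMinOn hS.zero_mem_interior 0
  obtain ⟨e, M, hfacet⟩ := hS.exists_facet v hv
  have hbox : dualPolytope S ⊆ (M.map (Int.castRingHom ℝ)).mulVec ⁻¹'
      Set.Icc (fun i => -(a (e i) : ℝ)) (fun i => C ^ r - a (e i)) := by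
    refine fun x hx => ⟨fun i => ?_, fun i => ?_⟩
    · rw [neg_le_iff_add_nonneg, hfacet.mulVec_add_eq_facetDistance]
      exact facetDistance_nonneg (hS.weight_pos _ (hfacet.mem i)) hx (hfacet.mem i)
    · rw [le_sub_iff_add_le, hfacet.mulVec_add_eq_facetDistance]
      exact hS.facetDistance_le_pow hcard hr hC hx (hfacet.mem i)
  calc MeasureTheory.volume (dualPolytope S)
      ≤ MeasureTheory.volume
          (Set.Icc (fun i => -(a (e i) : ℝ)) (fun i => C ^ r - a (e i))) :=
        (MeasureTheory.measure_mono hbox).trans_eq (volume_preimage_mulVec hfacet.isUnit_det _)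
    _ = ENNReal.ofReal ((C ^ r) ^ n) := by
        simp [Real.volume_Icc_pi, ENNReal.ofReal_pow (pow_nonneg (nonneg_of_forall_sum_le hC) r)]

/-- Proposition 4.5 (case `ρ ≥ 2`).  Let `Q ⊆ ℝⁿ` be a polytope with vertex set `S`
containing `0` in its interior, with positive integer weights `a s` on the vertices.
Assume that for every extreme point `v` of `Q*` the facet `{u ∈ Q : ⟨v,u⟩ = -1}` has
exactly `n` vertices `e₁,…,eₙ` with `(a(e₁)e₁,…,a(eₙ)eₙ)` a `ℤ`-basis of `ℤⁿ`; that
`r := #S - n ≥ 2`; and that every sum of at most `n` vertex weights is at most `C`.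
If `A = max_{s ∈ S} a(s)`, then `vol(Q*) ≤ (C^r · A)ⁿ`. -/
theorem stmt4 (n : ℕ) (hn : 1 ≤ n)
    (S : Finset (Fin n → ℝ)) (Q : Set (Fin n → ℝ))
    (hQ : Q = convexHull ℝ (S : Set (Fin n → ℝ)))
    (hvert : Set.extremePoints ℝ Q = (S : Set (Fin n → ℝ)))
    (h0 : (0 : Fin n → ℝ) ∈ interior Q)
    (a : (Fin n → ℝ) → ℤ) (hapos : ∀ s ∈ S, 0 < a s)
    (hfacet : ∀ v ∈ Set.extremePoints ℝ (dualSet n Q),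
      ∃ e : Fin n → (Fin n → ℝ), Function.Injective e ∧ (∀ i, e i ∈ S) ∧
        (∀ s ∈ S, ((∑ j, v j * s j = -1) ↔ ∃ i, e i = s)) ∧
        ∃ M : Matrix (Fin n) (Fin n) ℤ,
          (∀ i j, ((M i j : ℤ) : ℝ) = (a (e i) : ℝ) * e i j) ∧ IsUnit M.det)
    (r : ℕ) (hcard : S.card = n + r) (hr : 2 ≤ r)
    (C : ℝ) (hC : ∀ T ⊆ S, T.card ≤ n → ∑ s ∈ T, (a s : ℝ) ≤ C)
    (A : ℤ) (hA : IsGreatest (a '' (S : Set (Fin n → ℝ))) A) :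
    MeasureTheory.volume (dualSet n Q) ≤ ENNReal.ofReal ((C ^ r * (A : ℝ)) ^ n) := by
  subst hQ
  obtain ⟨⟨s, hs, rfl⟩, -⟩ := hA
  have hS : IsWeightedReflexive S a := ⟨hvert, h0, hapos, fun v hv =>
    let ⟨e, he, heS, hve, M, hM, hdet⟩ := hfacet v hv
    ⟨e, M, he, heS, hve, hM, hdet⟩⟩
  have hCr : 0 ≤ C ^ r := pow_nonneg (nonneg_of_forall_sum_le hC) r
  have hle : C ^ r ≤ C ^ r * a s := le_mul_of_one_le_right hCr (mod_cast hapos s hs)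
  exact (stmt4_general hS hcard hr hC).trans
    (ENNReal.ofReal_le_ofReal (pow_le_pow_left₀ hCr hle n))
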